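/- Let K be the convex hull of the four qubit density matrices |0⟩⟨0|, |1⟩⟨1|, |+⟩⟨+|, |−⟩⟨−|. Then K does not admit a preparation-and-measurement noncontextual model. -/

import Mathlib

open Matrix
open scoped Kronecker ComplexOrder BigOperators

noncomputable section

/-- A density matrix: positive semidefinite with trace 1. -/
def IsDensity {d : Type*} [Fintype d] [DecidableEq d] (ρ : Matrix d d ℂ) : Prop :=
  ρ.PosSemidef ∧ ρ.trace = 1

/-- Partial trace over the second (B) factor. -/
def trB {m n : ℕ} (ρ : Matrix (Fin m × Fin n) (Fin m × Fin n) ℂ) :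
    Matrix (Fin m) (Fin m) ℂ := fun i j => ∑ k, ρ (i, k) (j, k)

/-- Partial trace over the first (A) factor. -/
def trA {m n : ℕ} (ρ : Matrix (Fin m × Fin n) (Fin m × Fin n) ℂ) :
    Matrix (Fin n) (Fin n) ℂ := fun k l => ∑ i, ρ (i, k) (i, l)

/-- The set of states remotely preparable on Alice's side. -/
def LambdaA {m n : ℕ} (ρ : Matrix (Fin m × Fin n) (Fin m × Fin n) ℂ) :
    Set (Matrix (Fin m) (Fin m) ℂ) :=
  {σ | IsDensity σ ∧ ∃ E : Matrix (Fin n) (Fin n) ℂ, E.PosSemidef ∧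
    σ = trB (((1 : Matrix (Fin m) (Fin m) ℂ) ⊗ₖ E) * ρ)}

/-- The set of states remotely preparable on Bob's side. -/
def LambdaB {m n : ℕ} (ρ : Matrix (Fin m × Fin n) (Fin m × Fin n) ℂ) :
    Set (Matrix (Fin n) (Fin n) ℂ) :=
  {σ | IsDensity σ ∧ ∃ E : Matrix (Fin m) (Fin m) ℂ, E.PosSemidef ∧
    σ = trA ((E ⊗ₖ (1 : Matrix (Fin n) (Fin n) ℂ)) * ρ)}

/-- A preparation-and-measurement noncontextual model for a set `K` of density matrices. -/
def HasNCModel {d : ℕ} (K : Set (Matrix (Fin d) (Fin d) ℂ)) : Prop :=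
  ∃ (L : ℕ) (N ω : Fin L → Matrix (Fin d) (Fin d) ℂ),
    (∀ l, (N l).IsHermitian) ∧ (∀ l, IsDensity (ω l)) ∧
    (∀ ρ ∈ K, ∀ l, 0 ≤ (ρ * N l).trace) ∧
    (∀ ρ ∈ K, ∑ l, (ρ * N l).trace = 1) ∧
    (∀ ρ ∈ K, ∀ M : Matrix (Fin d) (Fin d) ℂ, M.PosSemidef → (1 - M).PosSemidef →
      (ρ * M).trace = ∑ l, (ρ * N l).trace * (ω l * M).trace)

/-- Separability of a bipartite density matrix. -/
def Separable {m n : ℕ} (ρ : Matrix (Fin m × Fin n) (Fin m × Fin n) ℂ) : Prop :=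
  ∃ (L : ℕ) (ω : Fin L → Matrix (Fin m) (Fin m) ℂ)
    (κ : Fin L → Matrix (Fin n) (Fin n) ℂ),
    (∀ l, IsDensity (ω l)) ∧ (∀ l, (κ l).PosSemidef) ∧ ρ = ∑ l, ω l ⊗ₖ κ l

/-- The projector |0⟩⟨0|. -/
def proj0 : Matrix (Fin 2) (Fin 2) ℂ := !![1, 0; 0, 0]

/-- The projector |1⟩⟨1|. -/
def proj1 : Matrix (Fin 2) (Fin 2) ℂ := !![0, 0; 0, 1]

/-- The projector |+⟩⟨+|. -/
def projPlus : Matrix (Fin 2) (Fin 2) ℂ := (1 / 2 : ℂ) • !![1, 1; 1, 1]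

/-- The projector |−⟩⟨−|. -/
def projMinus : Matrix (Fin 2) (Fin 2) ℂ := (1 / 2 : ℂ) • !![1, -1; -1, 1]

lemma conj_two : (starRingEnd ℂ) 2 = 2 := Complex.conj_ofNat 2

lemma psd_of_proj {P : Matrix (Fin 2) (Fin 2) ℂ} (h : Pᴴ * P = P) : P.PosSemidef := by
  rw [← h]; exact posSemidef_conjTranspose_mul_self P

lemma psd0 : proj0.PosSemidef := psd_of_proj (by
  ext i j; fin_cases i <;> fin_cases j <;> simp [proj0, Matrix.mul_apply])

lemma psd1 : proj1.PosSemidef := psd_of_proj (by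
  ext i j; fin_cases i <;> fin_cases j <;> simp [proj1, Matrix.mul_apply])

lemma psdP : projPlus.PosSemidef := psd_of_proj (by
  ext i j; fin_cases i <;> fin_cases j <;> simp [projPlus, Matrix.mul_apply, conj_two] <;> norm_num)

lemma psdM : projMinus.PosSemidef := psd_of_proj (by
  ext i j; fin_cases i <;> fin_cases j <;> simp [projMinus, Matrix.mul_apply, conj_two] <;> norm_num)

lemma sub1 : 1 - proj1 = proj0 := by
  ext i j; fin_cases i <;> fin_cases j <;> simp [proj0, proj1]

lemma subP : 1 - projPlus = projMinus := by
  ext i j; fin_cases i <;> fin_cases j <;> simp [projPlus, projMinus] <;> norm_num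

lemma subM : 1 - projMinus = projPlus := by
  ext i j; fin_cases i <;> fin_cases j <;> simp [projPlus, projMinus] <;> norm_num

lemma trace_nonneg_of_proj {P W : Matrix (Fin 2) (Fin 2) ℂ} (hP : P * Pᴴ = P)
    (hW : W.PosSemidef) : 0 ≤ (W * P).trace := by
  rw [← hP, ← Matrix.mul_assoc, Matrix.trace_mul_comm, ← Matrix.mul_assoc]
  exact (hW.conjTranspose_mul_mul_same P).trace_nonneg

lemma density_offdiag {W : Matrix (Fin 2) (Fin 2) ℂ} (hW : W.PosSemidef) (h : W 1 1 = 0) :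
    W 0 1 = 0 ∧ W 1 0 = 0 := by
  have hd := hW.det_nonneg
  have hs : W 1 0 = star (W 0 1) := (hW.isHermitian.apply 1 0).symm
  rw [Matrix.det_fin_two, h, hs] at hd
  have h0 : W 0 1 = 0 := by
    have h2 : 0 ≤ W 0 1 * star (W 0 1) := mul_star_self_nonneg _
    have h3 : W 0 1 * star (W 0 1) = 0 := le_antisymm (by simpa using hd) h2
    simpa using h3
  exact ⟨h0, by rw [hs, h0, star_zero]⟩

theorem square_states_contextual :
    ¬ HasNCModel (convexHull ℝ
      ({proj0, proj1, projPlus, projMinus} : Set (Matrix (Fin 2) (Fin 2) ℂ))) := by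
  rintro ⟨L, N, ω, -, hω, hpos, hsum, hM⟩
  have m0 : proj0 ∈ convexHull ℝ
      ({proj0, proj1, projPlus, projMinus} : Set (Matrix (Fin 2) (Fin 2) ℂ)) :=
    subset_convexHull ℝ _ (by simp)
  have m1 : proj1 ∈ convexHull ℝ
      ({proj0, proj1, projPlus, projMinus} : Set (Matrix (Fin 2) (Fin 2) ℂ)) :=
    subset_convexHull ℝ _ (by simp)
  have mP : projPlus ∈ convexHull ℝ
      ({proj0, proj1, projPlus, projMinus} : Set (Matrix (Fin 2) (Fin 2) ℂ)) :=
    subset_convexHull ℝ _ (by simp)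
  have mM : projMinus ∈ convexHull ℝ
      ({proj0, proj1, projPlus, projMinus} : Set (Matrix (Fin 2) (Fin 2) ℂ)) :=
    subset_convexHull ℝ _ (by simp)
  have key : ∀ ρ ∈ convexHull ℝ
      ({proj0, proj1, projPlus, projMinus} : Set (Matrix (Fin 2) (Fin 2) ℂ)),
      ∀ P : Matrix (Fin 2) (Fin 2) ℂ, P * Pᴴ = P → P.PosSemidef → (1 - P).PosSemidef →
      (ρ * P).trace = 0 → ∀ l, (ρ * N l).trace = 0 ∨ (ω l * P).trace = 0 := by
    intro ρ hρ P hP h1 h2 h0 l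
    have h := hM ρ hρ P h1 h2
    rw [h0] at h
    have h' := (Finset.sum_eq_zero_iff_of_nonneg (fun l _ =>
      mul_nonneg (hpos ρ hρ l) (trace_nonneg_of_proj hP (hω l).1))).1 h.symm l (Finset.mem_univ l)
    exact mul_eq_zero.1 h'
  have k1 := key proj0 m0 proj1
    (by ext i j; fin_cases i <;> fin_cases j <;> simp [proj1, Matrix.mul_apply])
    psd1 (sub1 ▸ psd0) (by simp [proj0, proj1, Matrix.trace_fin_two])
  have kP := key projMinus mM projPlus
    (by ext i j; fin_cases i <;> fin_cases j <;> simp [projPlus, Matrix.mul_apply, conj_two] <;> norm_num)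
    psdP (subP ▸ psdM) (by simp [projPlus, projMinus, Matrix.trace_fin_two])
  have kM := key projPlus mP projMinus
    (by ext i j; fin_cases i <;> fin_cases j <;> simp [projMinus, Matrix.mul_apply, conj_two] <;> norm_num)
    psdM (subM ▸ psdP) (by simp [projPlus, projMinus, Matrix.trace_fin_two])
  have hz : ∀ l, (proj0 * N l).trace = 0 := by
    intro l
    rcases k1 l with h | h
    · exact h
    have h11 : ω l 1 1 = 0 := by simpa [proj1, Matrix.trace_fin_two, Matrix.mul_apply] using h
    obtain ⟨h01, h10⟩ := density_offdiag (hω l).1 h11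
    have h00 : ω l 0 0 = 1 := by
      have := (hω l).2
      rw [Matrix.trace_fin_two, h11, add_zero] at this
      exact this
    have c : (projMinus * N l).trace = 0 := (kP l).resolve_right (by
      simp [projPlus, Matrix.trace_fin_two, Matrix.mul_apply, h00, h01, h10, h11])
    have d : (projPlus * N l).trace = 0 := (kM l).resolve_right (by
      simp [projMinus, Matrix.trace_fin_two, Matrix.mul_apply, h00, h01, h10, h11])
    have e : proj0 + proj1 = projPlus + projMinus := by
      rw [← sub1, ← subP]; abel
    have f : (proj0 * N l).trace + (proj1 * N l).trace = 0 := by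
      rw [← Matrix.trace_add, ← Matrix.add_mul, e, Matrix.add_mul, Matrix.trace_add, c, d, add_zero]
    exact ((add_eq_zero_iff_of_nonneg (hpos _ m0 l) (hpos _ m1 l)).1 f).1
  have := hsum proj0 m0
  simp [hz] at this
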